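/- arXiv:2205.12166 — 3 statements merged into one kernel-verified Lean document; each statement's English description precedes it below -/
import Mathlib

section
/- For every coupling constant λ ≥ 0 and all source matrices J, K ∈ M_N(ℂ), the function Φ ↦ exp(−N·S(Φ) + N·(Σ_{m,n} J_{nm}·conj(Φ_{nm}) + Σ_{m,n} K_{mn}·Φ_{nm})) is absolutely integrable on M_N(ℂ) with respect to Lebesgue measure; consequently the LSZ partition function Z(J,K) is well defined, Z is an analytic function of the 2N² complex entries of (J,K), and Z(0,0) is a strictly positive real number. -/
/-!
The Gram matrix satisfies `Tr((Φ*Φ)²) = Σ |(Φ*Φ)_{ij}|² ≥ Σ |Φ_{nm}|⁴`, so the action is bounded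
below by a sum over the entries of `(E_n + Ẽ_m) t² + (λ/2) t⁴` at `t = |Φ_{nm}|`. Hence it is
coercive, `S(Φ) ≥ ε‖Φ‖² - C`, by the quartic term if `λ > 0` and by the quadratic one if `λ = 0`,
and `exp(-N S)` decays like a Gaussian.

The source term `L_Φ(J, K)` is real-linear in `Φ` and complex-linear in `(J, K)`, so `‖L_Φ‖` grows
at most linearly and `Z(J,K) = ∫ exp(-N S(Φ)) exp(L_Φ(J,K)) dΦ` is the Laplace transform of a weight
that beats `exp(r‖L_Φ‖)` for every `r`. Integrating the exponential series in `(J, K)` termwise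
gives a power series with infinite radius of convergence, since `(r‖L_Φ‖)ⁿ / n! ≤ exp(r‖L_Φ‖)`.
-/

open MeasureTheory Matrix

/-- The LSZ action `S(Φ) = Σ_{m,n} (E_n + Ẽ_m)|Φ_{nm}|² + (λ/2)·Tr((Φ*Φ)²)`,
viewed as a complex number. -/
noncomputable def lszAction (N : ℕ) (E Et : Fin N → ℝ) (lam : ℝ)
    (Φ : Fin N → Fin N → ℂ) : ℂ :=
  (∑ n, ∑ m, (((E n + Et m : ℝ)) : ℂ) * ((Complex.normSq (Φ n m) : ℝ) : ℂ))
    + ((lam / 2 : ℝ) : ℂ) *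
      ((((Matrix.of Φ)ᴴ * Matrix.of Φ) * ((Matrix.of Φ)ᴴ * Matrix.of Φ)).trace)

/-- The integrand of the LSZ partition function with sources `J`, `K`. -/
noncomputable def lszIntegrand (N : ℕ) (E Et : Fin N → ℝ) (lam : ℝ)
    (J K : Fin N → Fin N → ℂ) (Φ : Fin N → Fin N → ℂ) : ℂ :=
  Complex.exp (-(N : ℂ) * lszAction N E Et lam Φ
    + (N : ℂ) * ((∑ m, ∑ n, J n m * (starRingEnd ℂ) (Φ n m))
      + ∑ m, ∑ n, K m n * Φ n m))

/-- The LSZ partition function `Z(J,K)`, an integral over the space of complex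
`N×N` matrices with respect to Lebesgue measure. -/
noncomputable def lszZ (N : ℕ) (E Et : Fin N → ℝ) (lam : ℝ)
    (J K : Fin N → Fin N → ℂ) : ℂ :=
  ∫ Φ : Fin N → Fin N → ℂ, lszIntegrand N E Et lam J K Φ

section PowerSeries

open scoped NNReal ENNReal

variable {V X : Type*} [MeasurableSpace V] {μ : Measure V} [NormedAddCommGroup X]

section Integral

variable {𝕜 G : Type*} [RCLike 𝕜] [NormedSpace 𝕜 X] [NormedAddCommGroup G] [NormedSpace 𝕜 G]
  {p : V → FormalMultilinearSeries 𝕜 X G}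

theorem summable_integral_norm_apply (hp : ∀ n, Integrable (fun v => p v n) μ) {C : ℝ} {s : ℝ≥0}
    (hC : ∀ n, (∫ v, ‖p v n‖ ∂μ) * (s : ℝ) ^ n ≤ C) {y : X} (hy : ‖y‖ < s) :
    Summable fun n => ∫ v, ‖p v n fun _ => y‖ ∂μ := by
  have hs : (0 : ℝ) < s := (norm_nonneg y).trans_lt hy
  have hgeom : Summable fun n => C * (‖y‖ / s) ^ n :=
    (summable_geometric_of_lt_one (by positivity) ((div_lt_one hs).mpr hy)).mul_left C
  refine hgeom.of_nonneg_of_le (fun n => integral_nonneg fun v => norm_nonneg _) fun n => ?_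
  calc ∫ v, ‖p v n fun _ => y‖ ∂μ
      ≤ ∫ v, ‖p v n‖ * ‖y‖ ^ n ∂μ := by
        refine integral_mono_of_nonneg (.of_forall fun v => norm_nonneg _)
          ((hp n).norm.mul_const _) (.of_forall fun v => ?_)
        simpa using (p v n).le_opNorm fun _ => y
    _ = (∫ v, ‖p v n‖ ∂μ) * (s : ℝ) ^ n * (‖y‖ / s) ^ n := by
        rw [integral_mul_const, div_pow]; field_simp
    _ ≤ C * (‖y‖ / s) ^ n := by gcongr; exact hC n

theorem hasFPowerSeriesOnBall_integral [NormedSpace ℝ G] {F : V → X → G} {x : X} {r : ℝ≥0∞}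
    (hr : 0 < r) (hF : ∀ᵐ v ∂μ, HasFPowerSeriesOnBall (F v) (p v) x r)
    (hp : ∀ n, Integrable (fun v => p v n) μ)
    (hbound : ∀ s : ℝ≥0, s < r → ∃ C, ∀ n, (∫ v, ‖p v n‖ ∂μ) * (s : ℝ) ^ n ≤ C) :
    HasFPowerSeriesOnBall (fun y => ∫ v, F v y ∂μ) (fun n => ∫ v, p v n ∂μ) x r := by
  refine ⟨ENNReal.le_of_forall_nnreal_lt fun s hsr => ?_, hr, fun {y} hy => ?_⟩
  · obtain ⟨C, hC⟩ := hbound s hsr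
    refine FormalMultilinearSeries.le_radius_of_bound _ C fun n => le_trans ?_ (hC n)
    gcongr
    exact norm_integral_le_integral_norm _
  · obtain ⟨s, hys, hsr⟩ := ENNReal.lt_iff_exists_nnreal_btwn.mp (mem_eball_zero_iff.mp hy)
    obtain ⟨C, hC⟩ := hbound s hsr
    have hterm (n : ℕ) : Integrable (fun v => p v n fun _ => y) μ :=
      (ContinuousMultilinearMap.apply 𝕜 (fun _ : Fin n => X) G fun _ => y).integrable_comp (hp n)
    have hsum : Summable fun n => ∫ v, ‖p v n fun _ => y‖ ∂μ :=
      summable_integral_norm_apply hp hC (by simpa [enorm_eq_nnnorm, ← NNReal.coe_lt_coe] using hys)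
    have htsum : ∫ v, (∑' n, p v n fun _ => y) ∂μ = ∫ v, F v (x + y) ∂μ := by
      refine integral_congr_ae ?_
      filter_upwards [hF] with v hv using (hv.hasSum hy).tsum_eq
    simp only [ContinuousMultilinearMap.integral_apply (hp _), ← htsum]
    exact hasSum_integral_of_summable_integral_norm hterm hsum

end Integral

theorem continuous_compContinuousLinearMap {𝕜 Y G : Type*} [NontriviallyNormedField 𝕜]
    [NormedSpace 𝕜 X] [NormedAddCommGroup Y] [NormedSpace 𝕜 Y] [NormedAddCommGroup G]
    [NormedSpace 𝕜 G] (p : FormalMultilinearSeries 𝕜 Y G) (n : ℕ) :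
    Continuous fun u : X →L[𝕜] Y => p.compContinuousLinearMap u n := by
  have hcomp := (ContinuousMultilinearMap.compContinuousLinearMapContinuousMultilinear 𝕜
    (fun _ : Fin n => X) (fun _ : Fin n => Y) G).cont
  exact (hcomp.comp (continuous_pi fun _ => continuous_id)).clm_apply continuous_const

variable [NormedSpace ℂ X]

theorem hasFPowerSeriesOnBall_cexp_comp (L : X →L[ℂ] ℂ) :
    HasFPowerSeriesOnBall (fun x => Complex.exp (L x))
      ((NormedSpace.expSeries ℂ ℂ).compContinuousLinearMap L) 0 ⊤ := by
  have h : HasFPowerSeriesOnBall Complex.exp (NormedSpace.expSeries ℂ ℂ) (L 0) ⊤ := by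
    rw [map_zero, Complex.exp_eq_exp_ℂ]
    exact NormedSpace.exp_hasFPowerSeriesOnBall
  simpa [ENNReal.top_div, Function.comp_def] using h.compContinuousLinearMap

theorem norm_expSeries_compContinuousLinearMap_mul_pow_le (L : X →L[ℂ] ℂ) (s : ℝ≥0) (n : ℕ) :
    ‖(NormedSpace.expSeries ℂ ℂ).compContinuousLinearMap L n‖ * (s : ℝ) ^ n
      ≤ Real.exp (s * ‖L‖) := by
  have hseries : ‖NormedSpace.expSeries ℂ ℂ n‖ = (n.factorial : ℝ)⁻¹ := by
    simp [NormedSpace.expSeries, norm_smul]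
  calc ‖(NormedSpace.expSeries ℂ ℂ).compContinuousLinearMap L n‖ * (s : ℝ) ^ n
      ≤ (n.factorial : ℝ)⁻¹ * ‖L‖ ^ n * (s : ℝ) ^ n := by
        rw [← hseries]
        gcongr
        exact FormalMultilinearSeries.norm_compContinuousLinearMap_le _ _ _
    _ = (s * ‖L‖) ^ n / n.factorial := by rw [mul_pow]; ring
    _ ≤ Real.exp (s * ‖L‖) := Real.pow_div_factorial_le_exp _ (by positivity) n

variable {f : V → ℂ} {L : V → X →L[ℂ] ℂ}

theorem integrable_mul_cexp (hf : AEStronglyMeasurable f μ)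
    (hL : AEStronglyMeasurable L μ)
    (hfL : ∀ r : ℝ, Integrable (fun v => ‖f v‖ * Real.exp (r * ‖L v‖)) μ) (x : X) :
    Integrable (fun v => f v * Complex.exp (L v x)) μ := by
  have hLx : AEStronglyMeasurable (fun v => L v x) μ :=
    (ContinuousLinearMap.apply ℂ ℂ x).continuous.comp_aestronglyMeasurable hL
  refine (hfL ‖x‖).mono' (hf.mul (Complex.continuous_exp.comp_aestronglyMeasurable hLx))
    (.of_forall fun v => ?_)
  rw [norm_mul, mul_comm ‖x‖]
  gcongr
  exact (Complex.norm_exp_le_exp_norm _).trans (Real.exp_le_exp.mpr ((L v).le_opNorm x))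

theorem analyticOnNhd_integral_mul_cexp (hf : AEStronglyMeasurable f μ)
    (hL : AEStronglyMeasurable L μ)
    (hfL : ∀ r : ℝ, Integrable (fun v => ‖f v‖ * Real.exp (r * ‖L v‖)) μ) :
    AnalyticOnNhd ℂ (fun x => ∫ v, f v * Complex.exp (L v x) ∂μ) Set.univ := by
  let p (v : V) : FormalMultilinearSeries ℂ X ℂ :=
    f v • (NormedSpace.expSeries ℂ ℂ).compContinuousLinearMap (L v)
  have hpow (v : V) :
      HasFPowerSeriesOnBall (fun x => f v * Complex.exp (L v x)) (p v) 0 ⊤ :=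
    (hasFPowerSeriesOnBall_cexp_comp (L v)).const_smul (c := f v)
  have hp_le (s : ℝ≥0) (n : ℕ) (v : V) :
      ‖p v n‖ * (s : ℝ) ^ n ≤ ‖f v‖ * Real.exp (s * ‖L v‖) := by
    have hsmul : ‖p v n‖
        = ‖f v‖ * ‖(NormedSpace.expSeries ℂ ℂ).compContinuousLinearMap (L v) n‖ :=
      norm_smul (f v) ((NormedSpace.expSeries ℂ ℂ).compContinuousLinearMap (L v) n)
    rw [hsmul, mul_assoc]
    gcongr
    exact norm_expSeries_compContinuousLinearMap_mul_pow_le (L v) s n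
  have hp_int (n : ℕ) : Integrable (fun v => p v n) μ :=
    (hfL 1).mono' (hf.smul ((continuous_compContinuousLinearMap _ n).comp_aestronglyMeasurable hL))
      (.of_forall fun v => by simpa using hp_le 1 n v)
  have hbound (s : ℝ≥0) (n : ℕ) : (∫ v, ‖p v n‖ ∂μ) * (s : ℝ) ^ n
      ≤ ∫ v, ‖f v‖ * Real.exp (s * ‖L v‖) ∂μ := by
    rw [← integral_mul_const]
    exact integral_mono ((hp_int n).norm.mul_const _) (hfL s) (hp_le s n)
  simpa using (hasFPowerSeriesOnBall_integral ENNReal.zero_lt_top (.of_forall hpow) hp_int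
    fun s _ => ⟨_, hbound s⟩).analyticOnNhd

end PowerSeries

section Gaussian

variable {V : Type*} [NormedAddCommGroup V] [NormedSpace ℝ V] [FiniteDimensional ℝ V]
  [MeasurableSpace V] [BorelSpace V] (μ : Measure V) [μ.IsAddHaarMeasure] {a : ℝ}

theorem integrable_exp_neg_mul_norm_sq_add (ha : 0 < a) (c : ℝ) :
    Integrable (fun v : V => Real.exp (-a * ‖v‖ ^ 2 + c * ‖v‖)) μ := by
  set r : ℝ := Module.finrank ℝ V + 1
  refine ((integrable_one_add_norm (μ := μ) (r := r) (lt_add_one _)).const_mul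
    (Real.exp ((c + r) ^ 2 / (4 * a)))).mono' (Continuous.aestronglyMeasurable (by fun_prop))
    (.of_forall fun v => ?_)
  have hlog : r * Real.log (1 + ‖v‖) ≤ r * ‖v‖ := by
    gcongr
    linarith [Real.log_le_sub_one_of_pos (show 0 < 1 + ‖v‖ by positivity)]
  have hsquare : (c + r) ^ 2 / (4 * a) - (-a * ‖v‖ ^ 2 + (c + r) * ‖v‖)
      = (c + r - 2 * a * ‖v‖) ^ 2 / (4 * a) := by field_simp; ring
  have hsquare_nonneg : 0 ≤ (c + r - 2 * a * ‖v‖) ^ 2 / (4 * a) := by positivity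
  rw [Real.norm_of_nonneg (Real.exp_pos _).le, Real.rpow_def_of_pos (by positivity),
    ← Real.exp_add]
  exact Real.exp_le_exp.mpr (by linarith)

theorem integrable_norm_mul_exp_of_norm_le_gaussian {Y : Type*} [SeminormedAddCommGroup Y]
    [NormedSpace ℝ Y] {w : V → ℂ} {C : ℝ} (hw : AEStronglyMeasurable w μ) (ha : 0 < a)
    (hwC : ∀ v, ‖w v‖ ≤ C * Real.exp (-a * ‖v‖ ^ 2)) (L : V →L[ℝ] Y) (r : ℝ) :
    Integrable (fun v => ‖w v‖ * Real.exp (r * ‖L v‖)) μ := by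
  refine ((integrable_exp_neg_mul_norm_sq_add μ ha (|r| * ‖L‖)).const_mul C).mono'
    (hw.norm.mul (Continuous.aestronglyMeasurable (by fun_prop))) (.of_forall fun v => ?_)
  have hrL : r * ‖L v‖ ≤ |r| * ‖L‖ * ‖v‖ := by
    rw [mul_assoc]
    gcongr
    exacts [le_abs_self r, L.le_opNorm v]
  rw [Real.norm_of_nonneg (by positivity), Real.exp_add, ← mul_assoc]
  exact mul_le_mul (hwC v) (Real.exp_le_exp.mpr hrL) (Real.exp_pos _).le
    ((norm_nonneg _).trans (hwC v))

end Gaussian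

section Matrices

variable {m n : Type*} [Fintype m] [Fintype n]

theorem trace_mul_self_of_isHermitian {𝕜 : Type*} [RCLike 𝕜] {A : Matrix n n 𝕜}
    (hA : A.IsHermitian) : (A * A).trace = ((∑ i, ∑ j, ‖A i j‖ ^ 2 : ℝ) : 𝕜) := by
  simp only [trace, diag_apply, mul_apply]
  push_cast
  refine Finset.sum_congr rfl fun i _ => Finset.sum_congr rfl fun j _ => ?_
  rw [← hA.apply j i]
  exact RCLike.mul_conj _

theorem sum_norm_pow_four_le_sum_norm_sq_conjTranspose_mul_self {𝕜 : Type*} [RCLike 𝕜]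
    (A : Matrix m n 𝕜) :
    ∑ i, ∑ j, ‖A i j‖ ^ 4 ≤ ∑ i, ∑ j, ‖(Aᴴ * A) i j‖ ^ 2 := by
  have hdiag (j : n) : ‖(Aᴴ * A) j j‖ = ∑ i, ‖A i j‖ ^ 2 := by
    have : (Aᴴ * A) j j = ((∑ i, ‖A i j‖ ^ 2 : ℝ) : 𝕜) := by
      simp [mul_apply, RCLike.conj_mul]
    rw [this, RCLike.norm_of_nonneg (by positivity)]
  rw [Finset.sum_comm]
  gcongr with j
  calc ∑ i, ‖A i j‖ ^ 4 = ∑ i, (‖A i j‖ ^ 2) ^ 2 := by simp only [← pow_mul]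
    _ ≤ (∑ i, ‖A i j‖ ^ 2) ^ 2 := Finset.sum_sq_le_sq_sum_of_nonneg fun i _ => by positivity
    _ = ‖(Aᴴ * A) j j‖ ^ 2 := by rw [hdiag]
    _ ≤ ∑ k, ‖(Aᴴ * A) j k‖ ^ 2 :=
      Finset.single_le_sum (f := fun k => ‖(Aᴴ * A) j k‖ ^ 2) (fun k _ => by positivity)
        (Finset.mem_univ j)

theorem norm_sq_le_sum_norm_sq {E : n → Type*} [∀ i, SeminormedAddCommGroup (E i)] (x : ∀ i, E i) :
    ‖x‖ ^ 2 ≤ ∑ i, ‖x i‖ ^ 2 := by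
  rw [← Real.le_sqrt (norm_nonneg x) (by positivity), pi_norm_le_iff_of_nonneg (Real.sqrt_nonneg _)]
  exact fun i => Real.le_sqrt_of_sq_le
    (Finset.single_le_sum (f := fun i => ‖x i‖ ^ 2) (fun i _ => by positivity) (Finset.mem_univ i))

end Matrices

theorem exists_mul_sq_sub_le_mul_sq_add_mul_pow_four {a b ε : ℝ} (hb : 0 ≤ b)
    (ha : b = 0 → ε ≤ a) : ∃ C, ∀ t : ℝ, ε * t ^ 2 - C ≤ a * t ^ 2 + b * t ^ 4 := by
  rcases hb.eq_or_lt with rfl | hb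
  · exact ⟨0, fun t => by nlinarith [mul_le_mul_of_nonneg_right (ha rfl) (sq_nonneg t)]⟩
  · refine ⟨(a - ε) ^ 2 / (4 * b), fun t => ?_⟩
    have hsquare : a * t ^ 2 + b * t ^ 4 - (ε * t ^ 2 - (a - ε) ^ 2 / (4 * b))
        = (2 * b * t ^ 2 + (a - ε)) ^ 2 / (4 * b) := by field_simp; ring
    have hnonneg : 0 ≤ (2 * b * t ^ 2 + (a - ε)) ^ 2 / (4 * b) := by positivity
    linarith

section LSZ

variable {N : ℕ} {E Et : Fin N → ℝ} {lam : ℝ}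

theorem lszAction_eq_ofReal (Φ : Fin N → Fin N → ℂ) :
    lszAction N E Et lam Φ = ((∑ n, ∑ m, (E n + Et m) * ‖Φ n m‖ ^ 2
      + lam / 2 * ∑ i, ∑ j, ‖((of Φ)ᴴ * of Φ) i j‖ ^ 2 : ℝ) : ℂ) := by
  rw [lszAction, trace_mul_self_of_isHermitian (isHermitian_conjTranspose_mul_self _)]
  simp only [Complex.normSq_eq_norm_sq]
  push_cast
  rfl

theorem ofReal_re_lszAction (Φ : Fin N → Fin N → ℂ) :
    ((lszAction N E Et lam Φ).re : ℂ) = lszAction N E Et lam Φ := by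
  rw [lszAction_eq_ofReal, Complex.ofReal_re]

theorem continuous_lszAction : Continuous (lszAction N E Et lam) := by
  have hof : Continuous fun Φ : Fin N → Fin N → ℂ => of Φ := continuous_id
  have hgram : Continuous fun Φ : Fin N → Fin N → ℂ => (of Φ)ᴴ * of Φ :=
    hof.matrix_conjTranspose.matrix_mul hof
  have hquadratic : Continuous fun Φ : Fin N → Fin N → ℂ =>
      ∑ n, ∑ m, ((E n + Et m : ℝ) : ℂ) * ((Complex.normSq (Φ n m) : ℝ) : ℂ) := by
    simp only [Complex.normSq_eq_norm_sq]
    fun_prop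
  exact hquadratic.add (continuous_const.mul (hgram.matrix_mul hgram).matrix_trace)

theorem continuous_cexp_neg_mul_lszAction :
    Continuous fun Φ => Complex.exp (-(N : ℂ) * lszAction N E Et lam Φ) :=
  Complex.continuous_exp.comp (continuous_const.mul continuous_lszAction)

theorem sum_le_re_lszAction (hlam : 0 ≤ lam) (Φ : Fin N → Fin N → ℂ) :
    ∑ n, ∑ m, ((E n + Et m) * ‖Φ n m‖ ^ 2 + lam / 2 * ‖Φ n m‖ ^ 4)
      ≤ (lszAction N E Et lam Φ).re := by
  rw [lszAction_eq_ofReal, Complex.ofReal_re]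
  simp only [Finset.sum_add_distrib, ← Finset.mul_sum]
  exact add_le_add_right (mul_le_mul_of_nonneg_left
    (sum_norm_pow_four_le_sum_norm_sq_conjTranspose_mul_self (of Φ)) (by positivity)) _

theorem exists_pos_le_add_of_coupling_eq_zero (hquad : lam = 0 → ∀ n m, 0 < E n + Et m) :
    ∃ ε > 0, lam = 0 → ∀ n m, ε ≤ E n + Et m := by
  by_cases hlam : lam = 0
  · have hsmall : ∀ᶠ ε in nhdsWithin (0 : ℝ) (Set.Ioi 0), ∀ n m, ε ≤ E n + Et m := by
      simp only [Filter.eventually_all]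
      exact fun n m => nhdsWithin_le_nhds (eventually_le_nhds (hquad hlam n m))
    obtain ⟨ε, hε, hpos⟩ := (hsmall.and self_mem_nhdsWithin).exists
    exact ⟨ε, hpos, fun _ => hε⟩
  · exact ⟨1, one_pos, fun h0 => absurd h0 hlam⟩

theorem exists_mul_norm_sq_sub_le_re_lszAction (hlam : 0 ≤ lam)
    (hquad : lam = 0 → ∀ n m, 0 < E n + Et m) :
    ∃ ε > 0, ∃ C, ∀ Φ, ε * ‖Φ‖ ^ 2 - C ≤ (lszAction N E Et lam Φ).re := by
  obtain ⟨ε, hε, hεE⟩ := exists_pos_le_add_of_coupling_eq_zero hquad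
  have hentry (n m : Fin N) :
      ∃ C, ∀ t : ℝ, ε * t ^ 2 - C ≤ (E n + Et m) * t ^ 2 + lam / 2 * t ^ 4 :=
    exists_mul_sq_sub_le_mul_sq_add_mul_pow_four (by positivity)
      fun h0 => hεE (by linarith) n m
  choose C hC using hentry
  have hnorm (Φ : Fin N → Fin N → ℂ) : ‖Φ‖ ^ 2 ≤ ∑ n, ∑ m, ‖Φ n m‖ ^ 2 :=
    (norm_sq_le_sum_norm_sq Φ).trans
      (Finset.sum_le_sum fun n _ => norm_sq_le_sum_norm_sq (Φ n))
  refine ⟨ε, hε, ∑ n, ∑ m, C n m, fun Φ => ?_⟩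
  calc ε * ‖Φ‖ ^ 2 - ∑ n, ∑ m, C n m
      ≤ ε * ∑ n, ∑ m, ‖Φ n m‖ ^ 2 - ∑ n, ∑ m, C n m := by gcongr; exact hnorm Φ
    _ = ∑ n, ∑ m, (ε * ‖Φ n m‖ ^ 2 - C n m) := by
        simp only [Finset.sum_sub_distrib, Finset.mul_sum]
    _ ≤ ∑ n, ∑ m, ((E n + Et m) * ‖Φ n m‖ ^ 2 + lam / 2 * ‖Φ n m‖ ^ 4) := by
        gcongr with n _ m; exact hC n m _
    _ ≤ (lszAction N E Et lam Φ).re := sum_le_re_lszAction hlam Φ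

variable (N) in
/-- The source term `N (Σ J_{nm} conj Φ_{nm} + Σ K_{mn} Φ_{nm})` as a linear functional of `(J, K)`
depending on `Φ`. Because of the conjugation it is only real-linear in `Φ`. -/
noncomputable def lszSource :
    (Fin N → Fin N → ℂ) →L[ℝ] (Fin N → Fin N → ℂ) × (Fin N → Fin N → ℂ) →L[ℂ] ℂ :=
  LinearMap.toContinuousLinearMap <|
    (LinearMap.toContinuousLinearMap.toLinearMap.restrictScalars ℝ).comp <|
      LinearMap.mk₂' ℝ ℂ
        (fun Φ p => (N : ℂ) * ((∑ m, ∑ n, p.1 n m * (starRingEnd ℂ) (Φ n m))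
          + ∑ m, ∑ n, p.2 m n * Φ n m))
        (fun Φ Ψ p => by
          simp only [Pi.add_apply, map_add, mul_add, Finset.sum_add_distrib]; ring)
        (fun c Φ p => by
          simp [Finset.mul_sum, mul_left_comm, mul_add])
        (fun Φ p q => by
          simp only [Prod.fst_add, Prod.snd_add, Pi.add_apply, add_mul, mul_add,
            Finset.sum_add_distrib]; ring)
        (fun c Φ p => by
          simp [Finset.mul_sum, mul_left_comm, mul_add, mul_assoc])

theorem lszIntegrand_eq_mul_cexp_lszSource (J K Φ : Fin N → Fin N → ℂ) :
    lszIntegrand N E Et lam J K Φ =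
      Complex.exp (-(N : ℂ) * lszAction N E Et lam Φ) * Complex.exp (lszSource N Φ (J, K)) :=
  Complex.exp_add _ _

theorem lszIntegrand_zero_zero (Φ : Fin N → Fin N → ℂ) :
    lszIntegrand N E Et lam 0 0 Φ
      = ((Real.exp (-N * (lszAction N E Et lam Φ).re) : ℝ) : ℂ) := by
  simp [lszIntegrand, ofReal_re_lszAction]

theorem norm_cexp_neg_mul_lszAction (Φ : Fin N → Fin N → ℂ) :
    ‖Complex.exp (-(N : ℂ) * lszAction N E Et lam Φ)‖
      = Real.exp (-N * (lszAction N E Et lam Φ).re) := by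
  rw [← ofReal_re_lszAction, Complex.norm_exp]
  simp

instance isAddHaarMeasure_volume_matrix :
    (volume : Measure (Fin N → Fin N → ℂ)).IsAddHaarMeasure :=
  Measure.pi.isAddHaarMeasure fun _ : Fin N => (volume : Measure (Fin N → ℂ))

theorem integrable_weight_mul_exp_lszSource (hN : 1 ≤ N) (hlam : 0 ≤ lam)
    (hquad : lam = 0 → ∀ n m, 0 < E n + Et m) (r : ℝ) :
    Integrable fun Φ => ‖Complex.exp (-(N : ℂ) * lszAction N E Et lam Φ)‖
      * Real.exp (r * ‖lszSource N Φ‖) := by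
  obtain ⟨ε, hε, C, hC⟩ := exists_mul_norm_sq_sub_le_re_lszAction hlam hquad
  have hN' : (0 : ℝ) < N := by exact_mod_cast hN
  refine integrable_norm_mul_exp_of_norm_le_gaussian volume
    continuous_cexp_neg_mul_lszAction.aestronglyMeasurable (C := Real.exp (N * C))
    (mul_pos hN' hε) (fun Φ => ?_) (lszSource N) r
  rw [norm_cexp_neg_mul_lszAction, ← Real.exp_add]
  exact Real.exp_le_exp.mpr (by linarith [mul_le_mul_of_nonneg_left (hC Φ) hN'.le])

theorem lszZ_zero_zero : lszZ N E Et lam 0 0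
    = ((∫ Φ, Real.exp (-N * (lszAction N E Et lam Φ).re) : ℝ) : ℂ) := by
  simp only [lszZ, lszIntegrand_zero_zero]
  exact integral_ofReal

end LSZ

theorem lsz_partition_function_wellDefined_general
    (N : ℕ) (hN : 1 ≤ N) (E Et : Fin N → ℝ) (lam : ℝ) (hlam : 0 ≤ lam)
    (hquad : lam = 0 → ∀ n m, 0 < E n + Et m) :
    (∀ J K : Fin N → Fin N → ℂ, Integrable (lszIntegrand N E Et lam J K)) ∧
    AnalyticOnNhd ℂ
      (fun p : (Fin N → Fin N → ℂ) × (Fin N → Fin N → ℂ) => lszZ N E Et lam p.1 p.2)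
      Set.univ ∧
    ((lszZ N E Et lam 0 0).im = 0 ∧ 0 < (lszZ N E Et lam 0 0).re) := by
  have hw : AEStronglyMeasurable fun Φ => Complex.exp (-(N : ℂ) * lszAction N E Et lam Φ) :=
    continuous_cexp_neg_mul_lszAction.aestronglyMeasurable
  have hL := (lszSource N).continuous.aestronglyMeasurable (μ := volume)
  have hwL := integrable_weight_mul_exp_lszSource hN hlam hquad
  have hint (J K : Fin N → Fin N → ℂ) : Integrable (lszIntegrand N E Et lam J K) := by
    simpa only [← lszIntegrand_eq_mul_cexp_lszSource] using integrable_mul_cexp hw hL hwL (J, K)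
  refine ⟨hint, ?_, ?_⟩
  · simpa only [lszZ, lszIntegrand_eq_mul_cexp_lszSource] using
      analyticOnNhd_integral_mul_cexp hw hL hwL
  · have hreal : Integrable fun Φ => Real.exp (-N * (lszAction N E Et lam Φ).re) := by
      simpa only [lszIntegrand_zero_zero, RCLike.re_eq_complex_re, Complex.ofReal_re]
        using (hint 0 0).re
    rw [lszZ_zero_zero, Complex.ofReal_im, Complex.ofReal_re]
    exact ⟨rfl, integral_exp_pos hreal⟩

/-- For every `λ ≥ 0` and all sources `J`, `K`, the LSZ integrand is
absolutely integrable on `M_N(ℂ)`; the partition function `Z` is an analytic function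
of the `2N²` complex entries of `(J,K)`; and `Z(0,0)` is a strictly positive real number. -/
theorem lsz_partition_function_wellDefined
    (N : ℕ) (hN : 1 ≤ N) (E Et : Fin N → ℝ)
    (hE : ∀ n, 0 < E n) (hEt : ∀ n, 0 < Et n) (lam : ℝ) (hlam : 0 ≤ lam) :
    (∀ J K : Fin N → Fin N → ℂ, Integrable (lszIntegrand N E Et lam J K)) ∧
    AnalyticOnNhd ℂ
      (fun p : (Fin N → Fin N → ℂ) × (Fin N → Fin N → ℂ) => lszZ N E Et lam p.1 p.2)
      Set.univ ∧
    ((lszZ N E Et lam 0 0).im = 0 ∧ 0 < (lszZ N E Et lam 0 0).re) := by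
  exact lsz_partition_function_wellDefined_general N hN E Et lam hlam
    fun _ n m => add_pos (hE n) (hEt m)
end

section
/- Let c, ε̃ ∈ ℂ, let b_1, b_2 ∈ ℂ satisfy b_1 + b_2 = 2ε̃ and (b_1 − b_2)² = −16c, and define x(z) := z − c/(z−ε̃) for z ≠ ε̃. Let ε ∈ ℂ with ε ≠ ε̃ and (ε−ε̃)² + c ≠ 0 (so that x'(ε) = 1 + c/(ε−ε̃)² ≠ 0), and set e := x(ε). Then (e−b_1)(e−b_2) = x'(ε)²·(ε̃−ε)² ≠ 0, and for every z ∈ ℂ \ {ε, ε̃}: ( 2(x(z)−e)/(x'(ε)(z−ε)) − (x(z)−e)/(x'(ε)(ε̃−ε)) − 1 )² = (x(z)−b_1)(x(z)−b_2) / ((e−b_1)(e−b_2)). -/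
/-!
The coordinate `z` uniformises the double cover `y² = (x - b₁)(x - b₂)`. With `u = z - a`, where `a`
is the midpoint of the branch points, completing the square gives
`(x(z) - b₁)(x(z) - b₂) = (u - c/u)² + 4c = (u + c/u)²`, so that `y = u + c/u = x'(z) u`. With
`w = ε - a`, the divided difference of `x` at `z` and `ε` is `1 + c/(u w)`, and
`(u + w)(1 + c/(u w)) = (u + c/u) + (w + c/w)`. The expression squared in the identity is therefore
the ratio of the values of `y` at `z` and at `ε`.
-/

/-- The spectral-curve coordinate `x(z) = z − c/(z−ε̃)` of the one-cut LSZ model. -/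
noncomputable def xCoord (c εt z : ℂ) : ℂ := z - c / (z - εt)

/-- Its derivative `x'(z) = 1 + c/(z−ε̃)²`. -/
noncomputable def xCoordDeriv (c εt z : ℂ) : ℂ := 1 + c / (z - εt) ^ 2

section Joukowski

variable {K : Type*} [Field K]

/-- The Joukowski map `u ↦ u - c / u` conjugated by the translation `u ↦ u + a`: the spectral-curve
coordinate `xCoord` over an arbitrary field. -/
def joukowski (c a z : K) : K := z - c / (z - a)

/-- The derivative of `joukowski c a`, given by its formula because `K` carries no topology. -/
def joukowskiDeriv (c a z : K) : K := 1 + c / (z - a) ^ 2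

variable {c a z w b₁ b₂ : K}

lemma joukowskiDeriv_ne_zero_iff (hz : z ≠ a) :
    joukowskiDeriv c a z ≠ 0 ↔ (z - a) ^ 2 + c ≠ 0 := by
  have hza : (z - a) ^ 2 ≠ 0 := pow_ne_zero 2 (sub_ne_zero.mpr hz)
  rw [joukowskiDeriv, one_add_div hza, div_ne_zero_iff, and_iff_left hza]

lemma joukowskiDeriv_mul_sub (hz : z ≠ a) :
    joukowskiDeriv c a z * (z - a) = (z - a) + c / (z - a) := by
  have hza : z - a ≠ 0 := sub_ne_zero.mpr hz
  rw [joukowskiDeriv]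
  field_simp

lemma joukowski_sub_joukowski (hz : z ≠ a) (hw : w ≠ a) :
    joukowski c a z - joukowski c a w = (1 + c / ((z - a) * (w - a))) * (z - w) := by
  have hza : z - a ≠ 0 := sub_ne_zero.mpr hz
  have hwa : w - a ≠ 0 := sub_ne_zero.mpr hw
  rw [joukowski, joukowski]
  field_simp
  ring

lemma joukowski_sub_sq_add_four_mul (hz : z ≠ a) :
    (joukowski c a z - a) ^ 2 + 4 * c = (joukowskiDeriv c a z * (z - a)) ^ 2 := by
  have hza : z - a ≠ 0 := sub_ne_zero.mpr hz
  have cross_term : (z - a) * (c / (z - a)) = c := mul_div_cancel₀ c hza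
  rw [joukowskiDeriv_mul_sub hz, joukowski]
  linear_combination (-4) * cross_term

lemma sub_mul_sub_eq_sq_add_four_mul [NeZero (2 : K)] (hsum : b₁ + b₂ = 2 * a)
    (hdiff : (b₁ - b₂) ^ 2 = -16 * c) (x : K) :
    (x - b₁) * (x - b₂) = (x - a) ^ 2 + 4 * c := by
  have four_ne_zero : (2 : K) ^ 2 ≠ 0 := pow_ne_zero 2 two_ne_zero
  apply mul_left_cancel₀ four_ne_zero
  linear_combination (-4 * x + b₁ + b₂ + 2 * a) * hsum - hdiff

lemma joukowski_sub_mul_sub [NeZero (2 : K)] (hsum : b₁ + b₂ = 2 * a)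
    (hdiff : (b₁ - b₂) ^ 2 = -16 * c) (hz : z ≠ a) :
    (joukowski c a z - b₁) * (joukowski c a z - b₂) = (joukowskiDeriv c a z * (z - a)) ^ 2 := by
  rw [sub_mul_sub_eq_sq_add_four_mul hsum hdiff, joukowski_sub_sq_add_four_mul hz]

lemma joukowskiDeriv_mul_sub_add_joukowskiDeriv_mul_sub (hz : z ≠ a) (hw : w ≠ a) :
    joukowskiDeriv c a z * (z - a) + joukowskiDeriv c a w * (w - a)
      = ((z - a) + (w - a)) * (1 + c / ((z - a) * (w - a))) := by
  have hza : z - a ≠ 0 := sub_ne_zero.mpr hz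
  have hwa : w - a ≠ 0 := sub_ne_zero.mpr hw
  rw [joukowskiDeriv_mul_sub hz, joukowskiDeriv_mul_sub hw]
  field_simp
  ring

lemma two_mul_joukowski_sub_div_sub_div_sub_one (hz : z ≠ a) (hw : w ≠ a) (hzw : z ≠ w)
    (hderiv : joukowskiDeriv c a w ≠ 0) :
    2 * (joukowski c a z - joukowski c a w) / (joukowskiDeriv c a w * (z - w))
        - (joukowski c a z - joukowski c a w) / (joukowskiDeriv c a w * (a - w)) - 1
      = joukowskiDeriv c a z * (z - a) / (joukowskiDeriv c a w * (w - a)) := by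
  have hwa : w - a ≠ 0 := sub_ne_zero.mpr hw
  have haw : a - w ≠ 0 := sub_ne_zero.mpr hw.symm
  have hzw' : z - w ≠ 0 := sub_ne_zero.mpr hzw
  rw [eq_div_iff (mul_ne_zero hderiv hwa), joukowski_sub_joukowski hz hw]
  calc
    _ = ((z - a) + (w - a)) * (1 + c / ((z - a) * (w - a)))
          - joukowskiDeriv c a w * (w - a) := by
      generalize 1 + c / ((z - a) * (w - a)) = d
      field_simp
      ring
    _ = joukowskiDeriv c a z * (z - a) := by
      rw [← joukowskiDeriv_mul_sub_add_joukowskiDeriv_mul_sub hz hw, add_sub_cancel_right]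

theorem lsz_one_cut_eigenvalue_identity_general [NeZero (2 : K)]
    (c a ε b₁ b₂ : K) (hsum : b₁ + b₂ = 2 * a) (hdiff : (b₁ - b₂) ^ 2 = -16 * c)
    (hε : ε ≠ a) (hx' : (ε - a) ^ 2 + c ≠ 0) :
    ((joukowski c a ε - b₁) * (joukowski c a ε - b₂)
        = joukowskiDeriv c a ε ^ 2 * (a - ε) ^ 2) ∧
    ((joukowski c a ε - b₁) * (joukowski c a ε - b₂) ≠ 0) ∧
    (∀ z : K, z ≠ ε → z ≠ a →
      (2 * (joukowski c a z - joukowski c a ε) / (joukowskiDeriv c a ε * (z - ε))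
        - (joukowski c a z - joukowski c a ε) / (joukowskiDeriv c a ε * (a - ε)) - 1) ^ 2
      = (joukowski c a z - b₁) * (joukowski c a z - b₂) /
          ((joukowski c a ε - b₁) * (joukowski c a ε - b₂))) := by
  have hderiv : joukowskiDeriv c a ε ≠ 0 := (joukowskiDeriv_ne_zero_iff hε).mpr hx'
  have branch_product_ε := joukowski_sub_mul_sub hsum hdiff hε
  rw [branch_product_ε]
  refine ⟨by ring, pow_ne_zero 2 (mul_ne_zero hderiv (sub_ne_zero.mpr hε)), fun z hzε hz ↦ ?_⟩
  rw [two_mul_joukowski_sub_div_sub_div_sub_one hz hε hzε hderiv,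
    joukowski_sub_mul_sub hsum hdiff hz, div_pow]

end Joukowski

/-- One-cut identity of the LSZ model: with `b₁ + b₂ = 2ε̃`,
`(b₁−b₂)² = −16c`, `ε ≠ ε̃`, `(ε−ε̃)² + c ≠ 0` and `e := x(ε)`, one has
`(e−b₁)(e−b₂) = x'(ε)²(ε̃−ε)² ≠ 0`, and for all `z ∉ {ε, ε̃}`:
`(2(x(z)−e)/(x'(ε)(z−ε)) − (x(z)−e)/(x'(ε)(ε̃−ε)) − 1)²
  = (x(z)−b₁)(x(z)−b₂)/((e−b₁)(e−b₂))`. -/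
theorem lsz_one_cut_eigenvalue_identity
    (c εt ε b₁ b₂ : ℂ) (h1 : b₁ + b₂ = 2 * εt) (h2 : (b₁ - b₂) ^ 2 = -16 * c)
    (hε : ε ≠ εt) (hx' : (ε - εt) ^ 2 + c ≠ 0) :
    ((xCoord c εt ε - b₁) * (xCoord c εt ε - b₂)
        = xCoordDeriv c εt ε ^ 2 * (εt - ε) ^ 2) ∧
    ((xCoord c εt ε - b₁) * (xCoord c εt ε - b₂) ≠ 0) ∧
    (∀ z : ℂ, z ≠ ε → z ≠ εt →
      (2 * (xCoord c εt z - xCoord c εt ε) / (xCoordDeriv c εt ε * (z - ε))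
        - (xCoord c εt z - xCoord c εt ε) / (xCoordDeriv c εt ε * (εt - ε)) - 1) ^ 2
      = (xCoord c εt z - b₁) * (xCoord c εt z - b₂) /
          ((xCoord c εt ε - b₁) * (xCoord c εt ε - b₂))) :=
  lsz_one_cut_eigenvalue_identity_general c εt ε b₁ b₂ h1 h2 hε hx'
end

section
/- Let e, ẽ, λ, N be positive real numbers, and set D := √((e+ẽ)² + 12λ), ε := (5e − ẽ + D)/6, ε̃ := (e − 5ẽ − D)/6, and ρ := ρ̃ := N·(−(e+ẽ)² + 12λ + (e+ẽ)·D)/(18λ). Then ε − ε̃ = (2(e+ẽ) + D)/3 > 0 and ρ > 0, and these values solve the system: e = ε − λρ̃/(N(ε−ε̃)), ẽ = −ε̃ − λρ/(N(ε−ε̃)), and N/ρ̃ − λρ/(N(ε−ε̃)²) = N/ρ − λρ̃/(N(ε−ε̃)²). Moreover ε + ε̃ = e − ẽ, and as λ → 0⁺ (with e, ẽ fixed) one has ε → e and ε̃ → −ẽ. -/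
/-- `D(λ) := √((e+ẽ)² + 12λ)` in the combinatorial limit of the LSZ model. -/
noncomputable def lszD (e et lam : ℝ) : ℝ := Real.sqrt ((e + et) ^ 2 + 12 * lam)

/-- `ε(λ) := (5e − ẽ + D)/6`. -/
noncomputable def lszEps (e et lam : ℝ) : ℝ := (5 * e - et + lszD e et lam) / 6

/-- `ε̃(λ) := (e − 5ẽ − D)/6`. -/
noncomputable def lszEpsT (e et lam : ℝ) : ℝ := (e - 5 * et - lszD e et lam) / 6

/-- `ρ(λ) = ρ̃(λ) := N·(−(e+ẽ)² + 12λ + (e+ẽ)·D)/(18λ)`. -/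
noncomputable def lszRho (Nr e et lam : ℝ) : ℝ :=
  Nr * (-(e + et) ^ 2 + 12 * lam + (e + et) * lszD e et lam) / (18 * lam)

/-!
Write `s = e + ẽ`, so that `12λ = D² - s² = (D - s)(D + s)`, and `ε - ε̃ = (2s + D)/3`. Then
`ρ = 2N(ε - ε̃)/(s + D)`, which is positive, and `λρ/(N(ε - ε̃)) = 2λ/(s + D) = (D - s)/6` is
exactly the amount by which `ε` exceeds `e` and `-ε̃` exceeds `ẽ`. The solution persists at
negative couplings down to the branch point `λ = -s²/12` of `D`, and its limits are values of
continuous functions at `λ = 0`, where `D = s`.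
-/

section SpectralCurve

variable {e et Nr lam : ℝ}

theorem lszD_sq (hlam : 0 ≤ (e + et) ^ 2 + 12 * lam) :
    lszD e et lam ^ 2 = (e + et) ^ 2 + 12 * lam :=
  Real.sq_sqrt hlam

theorem lszD_zero (hs : 0 ≤ e + et) : lszD e et 0 = e + et := by
  rw [lszD, mul_zero, add_zero, Real.sqrt_sq hs]

theorem add_lszD_pos (hs : 0 < e + et) : 0 < e + et + lszD e et lam :=
  add_pos_of_pos_of_nonneg hs (Real.sqrt_nonneg _)

theorem lszEps_sub_lszEpsT (e et lam : ℝ) :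
    lszEps e et lam - lszEpsT e et lam = (2 * (e + et) + lszD e et lam) / 3 := by
  unfold lszEps lszEpsT
  ring

theorem lszEps_add_lszEpsT (e et lam : ℝ) : lszEps e et lam + lszEpsT e et lam = e - et := by
  unfold lszEps lszEpsT
  ring

theorem lszEps_sub_lszEpsT_pos (hs : 0 < e + et) :
    0 < lszEps e et lam - lszEpsT e et lam := by
  rw [lszEps_sub_lszEpsT]
  linarith [add_lszD_pos (lam := lam) hs]

theorem lszRho_eq (Nr : ℝ) (hsD : e + et + lszD e et lam ≠ 0) (hlam₀ : lam ≠ 0)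
    (hlam : 0 ≤ (e + et) ^ 2 + 12 * lam) :
    lszRho Nr e et lam =
      2 * Nr * (lszEps e et lam - lszEpsT e et lam) / (e + et + lszD e et lam) := by
  rw [lszRho, lszEps_sub_lszEpsT, div_eq_div_iff (by positivity) hsD]
  linear_combination Nr * (e + et) * lszD_sq hlam

theorem lszRho_pos (hN : 0 < Nr) (hs : 0 < e + et) (hlam₀ : lam ≠ 0)
    (hlam : 0 ≤ (e + et) ^ 2 + 12 * lam) : 0 < lszRho Nr e et lam := by
  rw [lszRho_eq Nr (add_lszD_pos hs).ne' hlam₀ hlam]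
  exact div_pos (mul_pos (by positivity) (lszEps_sub_lszEpsT_pos hs)) (add_lszD_pos hs)

theorem mul_lszRho_div (hN : Nr ≠ 0) (hs : 0 < e + et) (hlam₀ : lam ≠ 0)
    (hlam : 0 ≤ (e + et) ^ 2 + 12 * lam) :
    lam * lszRho Nr e et lam / (Nr * (lszEps e et lam - lszEpsT e et lam)) =
      (lszD e et lam - (e + et)) / 6 := by
  have hsD : e + et + lszD e et lam ≠ 0 := (add_lszD_pos hs).ne'
  have hdiff : lszEps e et lam - lszEpsT e et lam ≠ 0 := (lszEps_sub_lszEpsT_pos hs).ne'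
  calc
    lam * lszRho Nr e et lam / (Nr * (lszEps e et lam - lszEpsT e et lam))
    _ = 2 * lam / (e + et + lszD e et lam) := by
      rw [lszRho_eq Nr hsD hlam₀ hlam]
      field_simp
    _ = (lszD e et lam - (e + et)) / 6 := by
      rw [div_eq_div_iff hsD (by norm_num)]
      linear_combination -lszD_sq hlam

theorem eq_lszEps_sub (hN : Nr ≠ 0) (hs : 0 < e + et) (hlam₀ : lam ≠ 0)
    (hlam : 0 ≤ (e + et) ^ 2 + 12 * lam) :
    e = lszEps e et lam -
      lam * lszRho Nr e et lam / (Nr * (lszEps e et lam - lszEpsT e et lam)) := by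
  rw [mul_lszRho_div hN hs hlam₀ hlam, lszEps]
  ring

theorem eq_neg_lszEpsT_sub (hN : Nr ≠ 0) (hs : 0 < e + et) (hlam₀ : lam ≠ 0)
    (hlam : 0 ≤ (e + et) ^ 2 + 12 * lam) :
    et = -lszEpsT e et lam -
      lam * lszRho Nr e et lam / (Nr * (lszEps e et lam - lszEpsT e et lam)) := by
  rw [mul_lszRho_div hN hs hlam₀ hlam, lszEpsT]
  ring

theorem tendsto_lszEps (hs : 0 ≤ e + et) :
    Filter.Tendsto (fun lam : ℝ => lszEps e et lam) (nhds 0) (nhds e) := by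
  have hcont : Continuous (lszEps e et) := by
    unfold lszEps lszD
    fun_prop
  refine hcont.tendsto' 0 e ?_
  rw [lszEps, lszD_zero hs]
  ring

theorem tendsto_lszEpsT (hs : 0 ≤ e + et) :
    Filter.Tendsto (fun lam : ℝ => lszEpsT e et lam) (nhds 0) (nhds (-et)) := by
  have hcont : Continuous (lszEpsT e et) := by
    unfold lszEpsT lszD
    fun_prop
  refine hcont.tendsto' 0 (-et) ?_
  rw [lszEpsT, lszD_zero hs]
  ring

end SpectralCurve

theorem lsz_combinatorial_limit_solution_general
    (e et Nr : ℝ) (hs : 0 < e + et) (hN : 0 < Nr) :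
    (∀ lam : ℝ, lam ≠ 0 → 0 ≤ (e + et) ^ 2 + 12 * lam →
      (lszEps e et lam - lszEpsT e et lam = (2 * (e + et) + lszD e et lam) / 3) ∧
      (0 < lszEps e et lam - lszEpsT e et lam) ∧
      (0 < lszRho Nr e et lam) ∧
      (e = lszEps e et lam -
        lam * lszRho Nr e et lam / (Nr * (lszEps e et lam - lszEpsT e et lam))) ∧
      (et = -lszEpsT e et lam -
        lam * lszRho Nr e et lam / (Nr * (lszEps e et lam - lszEpsT e et lam))) ∧
      (Nr / lszRho Nr e et lam -
          lam * lszRho Nr e et lam / (Nr * (lszEps e et lam - lszEpsT e et lam) ^ 2)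
        = Nr / lszRho Nr e et lam -
          lam * lszRho Nr e et lam / (Nr * (lszEps e et lam - lszEpsT e et lam) ^ 2)) ∧
      (lszEps e et lam + lszEpsT e et lam = e - et)) ∧
    Filter.Tendsto (fun lam : ℝ => lszEps e et lam) (nhds 0) (nhds e) ∧
    Filter.Tendsto (fun lam : ℝ => lszEpsT e et lam) (nhds 0) (nhds (-et)) :=
  ⟨fun lam hlam₀ hlam =>
    ⟨lszEps_sub_lszEpsT e et lam, lszEps_sub_lszEpsT_pos hs, lszRho_pos hN hs hlam₀ hlam,
      eq_lszEps_sub hN.ne' hs hlam₀ hlam, eq_neg_lszEpsT_sub hN.ne' hs hlam₀ hlam,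
      rfl, lszEps_add_lszEpsT e et lam⟩,
    tendsto_lszEps hs.le, tendsto_lszEpsT hs.le⟩

/-- Exact solution of the spectral curve data of the LSZ model in the
combinatorial limit: for `e, ẽ, λ, N > 0` the values `ε, ε̃, ρ = ρ̃` defined above satisfy
`ε − ε̃ = (2(e+ẽ) + D)/3 > 0`, `ρ > 0`, solve the system
`e = ε − λρ̃/(N(ε−ε̃))`, `ẽ = −ε̃ − λρ/(N(ε−ε̃))`,
`N/ρ̃ − λρ/(N(ε−ε̃)²) = N/ρ − λρ̃/(N(ε−ε̃)²)`, satisfy `ε + ε̃ = e − ẽ`, and as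
`λ → 0⁺` one has `ε → e` and `ε̃ → −ẽ`. -/
theorem lsz_combinatorial_limit_solution
    (e et Nr : ℝ) (he : 0 < e) (het : 0 < et) (hN : 0 < Nr) :
    (∀ lam : ℝ, 0 < lam →
      (lszEps e et lam - lszEpsT e et lam = (2 * (e + et) + lszD e et lam) / 3) ∧
      (0 < lszEps e et lam - lszEpsT e et lam) ∧
      (0 < lszRho Nr e et lam) ∧
      (e = lszEps e et lam -
        lam * lszRho Nr e et lam / (Nr * (lszEps e et lam - lszEpsT e et lam))) ∧
      (et = -lszEpsT e et lam -
        lam * lszRho Nr e et lam / (Nr * (lszEps e et lam - lszEpsT e et lam))) ∧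
      (Nr / lszRho Nr e et lam -
          lam * lszRho Nr e et lam / (Nr * (lszEps e et lam - lszEpsT e et lam) ^ 2)
        = Nr / lszRho Nr e et lam -
          lam * lszRho Nr e et lam / (Nr * (lszEps e et lam - lszEpsT e et lam) ^ 2)) ∧
      (lszEps e et lam + lszEpsT e et lam = e - et)) ∧
    Filter.Tendsto (fun lam : ℝ => lszEps e et lam)
      (nhdsWithin 0 (Set.Ioi 0)) (nhds e) ∧
    Filter.Tendsto (fun lam : ℝ => lszEpsT e et lam)
      (nhdsWithin 0 (Set.Ioi 0)) (nhds (-et)) := by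
  obtain ⟨hsol, hEps, hEpsT⟩ := lsz_combinatorial_limit_solution_general e et Nr (add_pos he het) hN
  exact ⟨fun lam hlam => hsol lam hlam.ne' (by positivity),
    hEps.mono_left nhdsWithin_le_nhds, hEpsT.mono_left nhdsWithin_le_nhds⟩
end
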